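/- Let d ≥ 1, k, l ∈ ℝ, T > 0, and let e₁ denote the first standard basis vector of ℝ^d. For a natural number N ≥ 2, define A_N = {ξ₁ ∈ ℝ^d : |ξ₁| < 1/2}, B_N = {ξ₂ ∈ ℝ^d : |ξ₂ − N e₁| < 1/4} and t_N = (1/(4N²)) · T/(1+T). Then there exist constants c, C > 0 depending only on k and l such that for all N ≥ 2, all ξ₁ ∈ A_N and all ξ₂ ∈ B_N: (i) c · N^{k−l} ≤ ⟨ξ₁+ξ₂⟩^k / (⟨ξ₁⟩^k ⟨ξ₂⟩^l) ≤ C · N^{k−l}; and (ii) for every s ∈ [0, t_N], cos(s(|ξ₁+ξ₂|² − |ξ₁|²)) · cos(s|ξ₂|) > 1/4. -/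

import Mathlib

/-!
On the two balls the triangle inequality puts `‖ξ₂‖` and `‖ξ₁ + ξ₂‖` within distance `3/4` of `N`,
so for `N ≥ 2` the brackets `⟨ξ₂⟩` and `⟨ξ₁ + ξ₂⟩` agree with `N` up to a factor `2`, while
`1 ≤ ⟨ξ₁⟩ ≤ 2`. Raising a factor-`2` comparison to a real power `p` costs a factor `2 ^ |p|`
(`rpow_le_of_comparable`), whatever the sign of `p`; hence (i) holds with
`C = 2 ^ |k| * 2 ^ |k| * 2 ^ |l|` and `c = C⁻¹`.

For (ii), both phases are at most `1/2` in absolute value for `s ≤ 1 / (4 N²)`, because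
`‖ξ₁ + ξ₂‖² ≤ (N + 3/4)² ≤ 2 N²` and `‖ξ₂‖ ≤ N + 1/4 ≤ 2 N²`. Each cosine is then at least
`1 - (1/2)² / 2 = 7/8`.
-/

/-- The Japanese bracket `⟨ξ⟩ = √(1+|ξ|²)`. -/
noncomputable def jb {d : ℕ} (ξ : EuclideanSpace ℝ (Fin d)) : ℝ :=
  Real.sqrt (1 + ‖ξ‖ ^ 2)

/-- Positive reals that agree up to a factor `2` have `p`-th powers that agree up to a factor
`2 ^ |p|`. The hypotheses are symmetric in `x` and `a`, so this also gives the lower bound. -/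
lemma rpow_le_of_comparable {x a : ℝ} (p : ℝ) (hx : 0 < x) (ha : 0 < a)
    (hxa : x ≤ 2 * a) (hax : a ≤ 2 * x) : x ^ p ≤ 2 ^ |p| * a ^ p := by
  rcases le_total 0 p with hp | hp
  · rw [abs_of_nonneg hp, ← Real.mul_rpow (by norm_num) ha.le]
    exact Real.rpow_le_rpow hx.le hxa hp
  · rw [abs_of_nonpos hp, Real.rpow_neg (by norm_num), ← Real.inv_rpow (by norm_num),
      ← Real.mul_rpow (by norm_num) ha.le]
    exact Real.rpow_le_rpow_of_nonpos (by positivity) (by linarith) hp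

lemma jb_pos {d : ℕ} (ξ : EuclideanSpace ℝ (Fin d)) : 0 < jb ξ :=
  Real.sqrt_pos.2 (by positivity)

lemma jb_comparable {d : ℕ} {ξ : EuclideanSpace ℝ (Fin d)} {n : ℝ} (hn : 2 ≤ n)
    (h₁ : n - 3 / 4 ≤ ‖ξ‖) (h₂ : ‖ξ‖ ≤ n + 3 / 4) : jb ξ ≤ 2 * n ∧ n ≤ 2 * jb ξ := by
  constructor
  · exact Real.sqrt_le_iff.2 ⟨by linarith, by nlinarith [norm_nonneg ξ]⟩
  · have : n / 2 ≤ jb ξ := Real.le_sqrt_of_sq_le (by nlinarith)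
    linarith

lemma seven_eighths_le_cos {x : ℝ} (hx : |x| ≤ 1 / 2) : 7 / 8 ≤ Real.cos x := by
  have h := Real.one_sub_sq_div_two_le_cos (x := x)
  have h' := abs_le.1 hx
  nlinarith

/-- On the balls `A_N = B(0, 1/2)` and `B_N = B(N e₁, 1/4)`, the symbol
`⟨ξ₁+ξ₂⟩^k / (⟨ξ₁⟩^k ⟨ξ₂⟩^l)` is comparable to `N^{k−l}`, with constants
depending only on `k` and `l`, and the product of cosines stays above `1/4`
for times up to `t_N = (1/(4N²)) · T/(1+T)`. -/
theorem ball_interaction_estimates (k l : ℝ) :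
    ∃ c > 0, ∃ C > 0, ∀ d : ℕ, ∀ hd : 1 ≤ d, ∀ T : ℝ, 0 < T → ∀ N : ℕ, 2 ≤ N →
      ∀ ξ₁ ∈ Metric.ball (0 : EuclideanSpace ℝ (Fin d)) (1 / 2),
      ∀ ξ₂ ∈ Metric.ball (EuclideanSpace.single (⟨0, hd⟩ : Fin d) (N : ℝ)) (1 / 4),
        (c * (N : ℝ) ^ (k - l) ≤ jb (ξ₁ + ξ₂) ^ k / (jb ξ₁ ^ k * jb ξ₂ ^ l) ∧
          jb (ξ₁ + ξ₂) ^ k / (jb ξ₁ ^ k * jb ξ₂ ^ l) ≤ C * (N : ℝ) ^ (k - l)) ∧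
        ∀ s ∈ Set.Icc (0 : ℝ) (1 / (4 * (N : ℝ) ^ 2) * (T / (1 + T))),
          1 / 4 < Real.cos (s * (‖ξ₁ + ξ₂‖ ^ 2 - ‖ξ₁‖ ^ 2)) * Real.cos (s * ‖ξ₂‖) := by
  have hM : (0 : ℝ) < 2 ^ |k| := by positivity
  have hL : (0 : ℝ) < 2 ^ |l| := by positivity
  set M : ℝ := 2 ^ |k|
  set L : ℝ := 2 ^ |l|
  refine ⟨(M * M * L)⁻¹, by positivity, M * M * L, by positivity, ?_⟩
  intro d hd T hT N hN ξ₁ h₁ ξ₂ h₂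
  have hn : (2 : ℝ) ≤ N := by exact_mod_cast hN
  generalize hNn : (N : ℝ) = n at *
  have hn0 : 0 < n := by linarith
  rw [mem_ball_zero_iff] at h₁
  rw [mem_ball_iff_norm] at h₂
  have he : ‖EuclideanSpace.single (⟨0, hd⟩ : Fin d) n‖ = n := by
    exact (PiLp.norm_single _ _ _ _).trans (Real.norm_of_nonneg hn0.le)
  have hξ₂ := abs_le.1 ((abs_norm_sub_norm_le ξ₂ (EuclideanSpace.single ⟨0, hd⟩ n)).trans h₂.le)
  rw [he] at hξ₂
  have hsum := norm_add_le ξ₁ ξ₂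
  have hsum' : ‖ξ₂‖ - ‖ξ₁‖ ≤ ‖ξ₁ + ξ₂‖ := by
    simpa [add_comm] using norm_sub_le_norm_add ξ₂ ξ₁
  have hz := norm_nonneg ξ₁
  obtain ⟨p₁, p₂⟩ := jb_comparable (ξ := ξ₁ + ξ₂) hn (by linarith) (by linarith)
  obtain ⟨r₁, r₂⟩ := jb_comparable (ξ := ξ₂) hn (by linarith) (by linarith)
  have q₁ : jb ξ₁ ≤ 2 * 1 := Real.sqrt_le_iff.2 ⟨by norm_num, by nlinarith⟩
  have q₂ : 1 ≤ jb ξ₁ := Real.le_sqrt_of_sq_le (by nlinarith)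
  have hp := jb_pos (ξ₁ + ξ₂)
  have hq := jb_pos ξ₁
  have hr := jb_pos ξ₂
  have P₁ := rpow_le_of_comparable k hp hn0 p₁ p₂
  have P₂ := rpow_le_of_comparable k hn0 hp p₂ p₁
  have Q₁ := rpow_le_of_comparable k hq one_pos q₁ (by linarith)
  have Q₂ := rpow_le_of_comparable k one_pos hq (by linarith) q₁
  have R₁ := rpow_le_of_comparable l hr hn0 r₁ r₂
  have R₂ := rpow_le_of_comparable l hn0 hr r₂ r₁
  rw [Real.one_rpow] at Q₁ Q₂
  have hP := Real.rpow_pos_of_pos hp k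
  have hQ := Real.rpow_pos_of_pos hq k
  have hR := Real.rpow_pos_of_pos hr l
  have hnk := Real.rpow_pos_of_pos hn0 k
  have hnl := Real.rpow_pos_of_pos hn0 l
  refine ⟨⟨?_, ?_⟩, ?_⟩
  · rw [Real.rpow_sub hn0, ← div_eq_inv_mul, div_div, div_le_div_iff₀ (by positivity)
      (by positivity)]
    calc n ^ k * (jb ξ₁ ^ k * jb ξ₂ ^ l)
        ≤ (M * jb (ξ₁ + ξ₂) ^ k) * ((M * 1) * (L * n ^ l)) := by gcongr
      _ = _ := by ring
  · rw [Real.rpow_sub hn0, ← mul_div_assoc, div_le_div_iff₀ (by positivity) (by positivity)]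
    calc jb (ξ₁ + ξ₂) ^ k * n ^ l
        = jb (ξ₁ + ξ₂) ^ k * (1 * n ^ l) := by ring
      _ ≤ (M * n ^ k) * ((M * jb ξ₁ ^ k) * (L * jb ξ₂ ^ l)) := by gcongr
      _ = _ := by ring
  · rintro s ⟨hs0, hs⟩
    have hs' : s ≤ 1 / (4 * n ^ 2) := hs.trans
      (mul_le_of_le_one_right (by positivity) ((div_le_one (by linarith)).2 (by linarith)))
    have key : ∀ y : ℝ, |y| ≤ 2 * n ^ 2 → 7 / 8 ≤ Real.cos (s * y) := by
      intro y hy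
      apply seven_eighths_le_cos
      rw [abs_mul, abs_of_nonneg hs0]
      calc s * |y| ≤ 1 / (4 * n ^ 2) * (2 * n ^ 2) := by gcongr
        _ = 1 / 2 := by field_simp; norm_num
    have hA := key (‖ξ₁ + ξ₂‖ ^ 2 - ‖ξ₁‖ ^ 2)
      (abs_le.2 ⟨by nlinarith, by nlinarith [norm_nonneg (ξ₁ + ξ₂)]⟩)
    have hB := key ‖ξ₂‖ (by rw [abs_norm]; nlinarith)
    nlinarith
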